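/- There is an absolute constant c > 0 such that for all positive integers n, m, k with 2m ≤ k·n and k ≤ m, the number of labelled graphs (possibly with loops but without parallel edges) on the vertex set {1,…,n} with exactly m edges and queue-number at most k is at most (c·k·n/m)^(2m) · n!. -/

import Mathlib

/-!
Two edges are non-nested exactly when they are comparable in the product order, so a queue is a
chain of pairs. A `k`-queue becomes a single chain once the endpoints of each edge are tagged with
the index of its part and tagged vertices are ordered lexicographically. A chain in `A × B` is
recovered from the multisets of its first and of its second coordinates by sorting both and
zipping, so there are at most `multichoose #A m * multichoose #B m` chains with `m` elements, and
none unless `m ≤ #A + #B`. For `#A = #B = k * n` the estimate `m ! ≥ (m / e) ^ m` turns this into a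
bound of `(3 * e * k * n / m) ^ (2 * m)` on the number of `k`-queues with `m` edges. Undoing the
vertex ordering costs a further factor `n !`.
-/

/-- Two edges `(v,w)` and `(x,y)` (each with first coordinate ≤ second) of an
ordered graph are nested (one is nested inside the other). -/
def Nested (e f : ℕ × ℕ) : Prop :=
  (e.1 < f.1 ∧ f.2 < e.2) ∨ (f.1 < e.1 ∧ e.2 < f.2)

/-- `E` is the edge set of an ordered graph on the vertex set `{1, …, n}`:
each edge is a pair `(v,w)` with `1 ≤ v ≤ w ≤ n` (loops allowed, no parallel edges). -/
def IsOrderedGraph (n : ℕ) (E : Finset (ℕ × ℕ)) : Prop :=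
  ∀ e ∈ E, 1 ≤ e.1 ∧ e.1 ≤ e.2 ∧ e.2 ≤ n

/-- An edge set is a queue if no two of its edges are nested. -/
def IsQueue (E : Finset (ℕ × ℕ)) : Prop :=
  ∀ e ∈ E, ∀ f ∈ E, ¬ Nested e f

/-- An edge set is a `k`-queue if it can be partitioned into at most `k` parts,
each of which is a queue. -/
def IsKQueue (k : ℕ) (E : Finset (ℕ × ℕ)) : Prop :=
  ∃ parts : Fin k → Finset (ℕ × ℕ),
    (∀ e ∈ E, ∃ i, e ∈ parts i) ∧
    (∀ i, parts i ⊆ E) ∧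
    (∀ i j, i ≠ j → Disjoint (parts i) (parts j)) ∧
    (∀ i, IsQueue (parts i))


/-- The edge set obtained from `E` by relabelling the vertices according to the
permutation `σ`, normalising each edge so its first endpoint is the smaller one. -/
def relabel (σ : Equiv.Perm ℕ) (E : Finset (ℕ × ℕ)) : Finset (ℕ × ℕ) :=
  E.image fun e => (min (σ e.1) (σ e.2), max (σ e.1) (σ e.2))


/-- The labelled graph `E` on `{1, …, n}` has queue-number at most `k`: under
some ordering (permutation) of the vertices `{1, …, n}`, its edge set becomes a
`k`-queue. -/
def QueueNumberLE (n k : ℕ) (E : Finset (ℕ × ℕ)) : Prop :=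
  ∃ σ : Equiv.Perm ℕ, (∀ v ∈ Finset.Icc 1 n, σ v ∈ Finset.Icc 1 n) ∧
    IsKQueue k (relabel σ E)

open scoped Finset

section Chains

variable {α β : Type*}

/-- The chains of the grid `A ×ˢ B` in the product order that have exactly `m` elements. -/
def gridChains [LE α] [LE β] (A : Finset α) (B : Finset β) (m : ℕ) : Set (Finset (α × β)) :=
  {C | C ⊆ A ×ˢ B ∧ IsChain (· ≤ ·) (C : Set (α × β)) ∧ #C = m}

lemma finite_gridChains [LE α] [LE β] (A : Finset α) (B : Finset β) (m : ℕ) :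
    (gridChains A B m).Finite :=
  (A ×ˢ B).powerset.finite_toSet.subset fun _ hC ↦ Finset.mem_coe.2 (Finset.mem_powerset.2 hC.1)

lemma strictMonoOn_card_filter_le [Preorder α] [DecidableLE α] (A : Finset α) :
    StrictMonoOn (fun a ↦ #{x ∈ A | x ≤ a}) A := by
  intro a _ b hb hab
  refine Finset.card_lt_card (Finset.ssubset_iff_of_subset ?_ |>.2 ⟨b, ?_, ?_⟩)
  · exact Finset.monotone_filter_right A fun _ _ hx ↦ hx.trans hab.le
  · simpa using hb
  · simp [hab.not_ge]

variable [PartialOrder α] [PartialOrder β]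

lemma exists_list_pairwise_le_of_isChain {C : Finset α} (hC : IsChain (· ≤ ·) (C : Set α)) :
    ∃ l : List α, (l : Multiset α) = C.val ∧ l.Pairwise (· ≤ ·) := by
  classical
  obtain ⟨r, _, le_imp_r⟩ := extend_partialOrder (α := α) (· ≤ ·)
  have mem_C {a : α} (ha : a ∈ C.sort r) : a ∈ C := (Finset.mem_sort r).1 ha
  refine ⟨C.sort r, Finset.sort_eq _ _, (Finset.pairwise_sort _ _).imp_of_mem ?_⟩
  intro a b ha hb hab
  rcases hC.total (mem_C ha) (mem_C hb) with h | h
  · exact h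
  · exact (antisymm_of r hab (le_imp_r b a h)).le

lemma eq_of_isChain_of_map_fst_eq_of_map_snd_eq {C D : Finset (α × β)}
    (hC : IsChain (· ≤ ·) (C : Set (α × β))) (hD : IsChain (· ≤ ·) (D : Set (α × β)))
    (hfst : C.val.map Prod.fst = D.val.map Prod.fst)
    (hsnd : C.val.map Prod.snd = D.val.map Prod.snd) : C = D := by
  obtain ⟨l, hlC, hl⟩ := exists_list_pairwise_le_of_isChain hC
  obtain ⟨r, hrD, hr⟩ := exists_list_pairwise_le_of_isChain hD
  rw [← hlC, ← hrD, Multiset.map_coe, Multiset.map_coe, Multiset.coe_eq_coe] at hfst hsnd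
  have map_fst_eq : l.map Prod.fst = r.map Prod.fst :=
    hfst.eq_of_pairwise' (hl.map _ fun _ _ h ↦ h.1) (hr.map _ fun _ _ h ↦ h.1)
  have map_snd_eq : l.map Prod.snd = r.map Prod.snd :=
    hsnd.eq_of_pairwise' (hl.map _ fun _ _ h ↦ h.2) (hr.map _ fun _ _ h ↦ h.2)
  have l_eq_r : l = r := by
    rw [← List.zip_unzip l, ← List.zip_unzip r, List.unzip_eq_map, List.unzip_eq_map, map_fst_eq,
      map_snd_eq]
  exact Finset.val_injective (by rw [← hlC, ← hrD, l_eq_r])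

lemma le_card_add_card_of_mem_gridChains {A : Finset α} {B : Finset β} {m : ℕ}
    {C : Finset (α × β)} (hC : C ∈ gridChains A B m) : m ≤ #A + #B := by
  classical
  obtain ⟨hCAB, hchain, rfl⟩ := hC
  let rank (p : α × β) : ℕ := #{a ∈ A | a ≤ p.1} + #{b ∈ B | b ≤ p.2}
  have rank_pos {p} (hp : p ∈ C) : 0 < rank p :=
    Nat.add_pos_left (Finset.card_pos.2 ⟨p.1, by simpa using (Finset.mem_product.1 (hCAB hp)).1⟩) _
  have rank_le (p) : rank p ≤ #A + #B :=
    add_le_add (Finset.card_filter_le _ _) (Finset.card_filter_le _ _)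
  have rank_lt {p q} (hp : p ∈ C) (hq : q ∈ C) (hpq : p < q) : rank p < rank q := by
    obtain ⟨hpA, hpB⟩ := Finset.mem_product.1 (hCAB hp)
    obtain ⟨hqA, hqB⟩ := Finset.mem_product.1 (hCAB hq)
    have rankA := strictMonoOn_card_filter_le A
    have rankB := strictMonoOn_card_filter_le B
    rcases Prod.lt_iff.1 hpq with ⟨h₁, h₂⟩ | ⟨h₁, h₂⟩
    · exact add_lt_add_of_lt_of_le (rankA hpA hqA h₁) (rankB.monotoneOn hpB hqB h₂)
    · exact add_lt_add_of_le_of_lt (rankA.monotoneOn hpA hqA h₁) (rankB hpB hqB h₂)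
  have rank_injOn : Set.InjOn rank C := by
    intro p hp q hq hpq
    by_contra hne
    rcases hchain.lt_of_le hp hq hne with h | h
    · exact (rank_lt hp hq h).ne hpq
    · exact (rank_lt hq hp h).ne' hpq
  simpa using Finset.card_le_card_of_injOn (t := Finset.Icc 1 (#A + #B)) rank
    (fun p hp ↦ by simpa using ⟨rank_pos hp, rank_le p⟩) rank_injOn

end Chains

section Counting

lemma range_map_coe_sym {α : Type*} (A : Finset α) (m : ℕ) :
    Set.range (fun s : Sym A m ↦ (s : Multiset A).map (↑)) =
      {M : Multiset α | Multiset.card M = m ∧ ∀ a ∈ M, a ∈ A} := by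
  ext M
  constructor
  · rintro ⟨s, rfl⟩
    simp +contextual
  · rintro ⟨hM, hMA⟩
    lift M to Multiset A using hMA
    exact ⟨⟨M, by simpa using hM⟩, rfl⟩

lemma ncard_multiset_card_eq {α : Type*} (A : Finset α) (m : ℕ) :
    {M : Multiset α | Multiset.card M = m ∧ ∀ a ∈ M, a ∈ A}.ncard = (#A).multichoose m := by
  classical
  have map_injective : Function.Injective fun s : Sym A m ↦ (s : Multiset A).map ((↑) : A → α) :=
    (Multiset.map_injective Subtype.val_injective).comp Sym.coe_injective
  rw [← range_map_coe_sym, ← Set.image_univ, Set.ncard_image_of_injective _ map_injective,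
    Set.ncard_univ, Nat.card_eq_fintype_card, Sym.card_sym_eq_multichoose, Fintype.card_coe]

lemma finite_multiset_card_eq {α : Type*} (A : Finset α) (m : ℕ) :
    {M : Multiset α | Multiset.card M = m ∧ ∀ a ∈ M, a ∈ A}.Finite := by
  classical
  rw [← range_map_coe_sym]
  exact Set.finite_range _

variable {α β : Type*} [PartialOrder α] [PartialOrder β]

lemma ncard_gridChains_le (A : Finset α) (B : Finset β) (m : ℕ) :
    (gridChains A B m).ncard ≤ (#A).multichoose m * (#B).multichoose m := by
  rw [← ncard_multiset_card_eq A, ← ncard_multiset_card_eq B, ← Set.ncard_prod]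
  refine Set.ncard_le_ncard_of_injOn (fun C ↦ (C.val.map Prod.fst, C.val.map Prod.snd)) ?_ ?_
    ((finite_multiset_card_eq A m).prod (finite_multiset_card_eq B m))
  · rintro C ⟨hCAB, -, hcard⟩
    have fst_mem (p) (hp : p ∈ C) : p.1 ∈ A := (Finset.mem_product.1 (hCAB hp)).1
    have snd_mem (p) (hp : p ∈ C) : p.2 ∈ B := (Finset.mem_product.1 (hCAB hp)).2
    constructor <;> constructor
    · simpa using hcard
    · simpa using fun a b hp ↦ fst_mem (a, b) hp
    · simpa using hcard
    · simpa using fun b a hp ↦ snd_mem (a, b) hp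
  · rintro C ⟨-, hC, -⟩ D ⟨-, hD, -⟩ hCD
    exact eq_of_isChain_of_map_fst_eq_of_map_snd_eq hC hD (Prod.ext_iff.1 hCD).1
      (Prod.ext_iff.1 hCD).2

lemma multichoose_le_exp_mul_div_pow (N m : ℕ) :
    (N.multichoose m : ℝ) ≤ (Real.exp 1 * (N + m) / m) ^ m := by
  have pow_self_pos : (0 : ℝ) < (m : ℝ) ^ m := mod_cast Nat.pow_self_pos
  have pow_self_le : (m : ℝ) ^ m / m.factorial ≤ Real.exp 1 ^ m := by
    rw [Real.exp_one_pow]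
    exact Real.pow_div_factorial_le_exp m m.cast_nonneg m
  rw [div_pow, le_div_iff₀ pow_self_pos]
  calc (N.multichoose m : ℝ) * m ^ m
      ≤ ((N + m - 1 : ℕ) : ℝ) ^ m / m.factorial * m ^ m := by
        rw [Nat.multichoose_eq]
        gcongr
        exact Nat.choose_le_pow_div _ _
    _ ≤ (N + m) ^ m / m.factorial * m ^ m := by
        gcongr
        exact_mod_cast Nat.sub_le (N + m) 1
    _ = (m ^ m / m.factorial) * (N + m) ^ m := by ring
    _ ≤ Real.exp 1 ^ m * (N + m) ^ m := by gcongr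
    _ = (Real.exp 1 * (N + m)) ^ m := (mul_pow _ _ _).symm

lemma ncard_gridChains_self_le (A : Finset α) (m : ℕ) :
    ((gridChains A A m).ncard : ℝ) ≤ (3 * Real.exp 1 * #A / m) ^ (2 * m) := by
  rcases (gridChains A A m).eq_empty_or_nonempty with hempty | ⟨C, hC⟩
  · rw [hempty, Set.ncard_empty, Nat.cast_zero]
    positivity
  have m_le : (m : ℝ) ≤ #A + #A := mod_cast le_card_add_card_of_mem_gridChains hC
  calc ((gridChains A A m).ncard : ℝ)
      ≤ ((#A).multichoose m : ℝ) * (#A).multichoose m := mod_cast ncard_gridChains_le A A m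
    _ ≤ (Real.exp 1 * (#A + m) / m) ^ m * (Real.exp 1 * (#A + m) / m) ^ m := by
        gcongr <;> exact multichoose_le_exp_mul_div_pow _ m
    _ = (Real.exp 1 * (#A + m) / m) ^ (2 * m) := by rw [two_mul, pow_add]
    _ ≤ (Real.exp 1 * (#A + (#A + #A)) / m) ^ (2 * m) := by gcongr
    _ = (3 * Real.exp 1 * #A / m) ^ (2 * m) := by ring

end Counting

section LexStack

variable {κ α β : Type*}

/-- Attaches the index `i` to both coordinates of a pair, as the more significant component in the
lexicographic order. -/
def tag (i : κ) (e : α × β) : (κ ×ₗ α) × (κ ×ₗ β) :=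
  (toLex (i, e.1), toLex (i, e.2))

/-- Forgets the indices attached by `tag`. -/
def untag (p : (κ ×ₗ α) × (κ ×ₗ β)) : α × β :=
  ((ofLex p.1).2, (ofLex p.2).2)

lemma tag_uncurry_injective :
    Function.Injective fun x : (_ : κ) × (α × β) ↦ tag x.1 x.2 := by
  rintro ⟨i, a, b⟩ ⟨j, c, d⟩ h
  simp_all [tag]

variable [Fintype κ] {P : κ → Finset (α × β)}

/-- A family of sets of pairs assembled into a single set: every pair is tagged with the index of
the member it comes from. For a linearly ordered index set, distinct members lie one above the other
in the product order. -/
def lexStack (P : κ → Finset (α × β)) : Finset ((κ ×ₗ α) × (κ ×ₗ β)) :=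
  (Finset.univ.sigma P).map ⟨fun x ↦ tag x.1 x.2, tag_uncurry_injective⟩

lemma mem_lexStack {p : (κ ×ₗ α) × (κ ×ₗ β)} :
    p ∈ lexStack P ↔ ∃ i, ∃ e ∈ P i, tag i e = p := by
  simp only [lexStack, Finset.mem_map, Finset.mem_sigma, Finset.mem_univ, true_and, Sigma.exists]
  rfl

lemma card_lexStack : #(lexStack P) = ∑ i, #(P i) := by
  simp [lexStack]

lemma image_untag_lexStack [DecidableEq α] [DecidableEq β] :
    (lexStack P).image untag = Finset.univ.biUnion P := by
  ext e
  simp only [Finset.mem_image, mem_lexStack, Finset.mem_biUnion, Finset.mem_univ, true_and]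
  constructor
  · rintro ⟨_, ⟨i, e, he, rfl⟩, rfl⟩
    exact ⟨i, he⟩
  · rintro ⟨i, he⟩
    exact ⟨_, ⟨i, e, he, rfl⟩, rfl⟩

lemma lexStack_subset_product {A : Finset α} {B : Finset β} (hP : ∀ i, P i ⊆ A ×ˢ B) :
    lexStack P ⊆
      ((Finset.univ ×ˢ A).map toLex.toEmbedding) ×ˢ ((Finset.univ ×ˢ B).map toLex.toEmbedding) := by
  intro p hp
  obtain ⟨i, e, he, rfl⟩ := mem_lexStack.1 hp
  simpa [tag] using hP i he

lemma isChain_lexStack [LinearOrder κ] [PartialOrder α] [PartialOrder β]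
    (hP : ∀ i, IsChain (· ≤ ·) (P i : Set (α × β))) :
    IsChain (· ≤ ·) (lexStack P : Set ((κ ×ₗ α) × (κ ×ₗ β))) := by
  intro p hp q hq _
  obtain ⟨i, e, he, rfl⟩ := mem_lexStack.1 hp
  obtain ⟨j, f, hf, rfl⟩ := mem_lexStack.1 hq
  simp only [tag, Prod.mk_le_mk, Prod.Lex.toLex_le_toLex]
  rcases lt_trichotomy i j with hij | rfl | hij
  · exact .inl ⟨.inl hij, .inl hij⟩
  · rcases (hP i).total he hf with h | h
    · exact .inl ⟨.inr ⟨rfl, h.1⟩, .inr ⟨rfl, h.2⟩⟩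
    · exact .inr ⟨.inr ⟨rfl, h.1⟩, .inr ⟨rfl, h.2⟩⟩
  · exact .inr ⟨.inl hij, .inl hij⟩

end LexStack

section Queues

variable {n m k : ℕ} {E : Finset (ℕ × ℕ)}

lemma not_nested_iff_le_or_le {e f : ℕ × ℕ} : ¬ Nested e f ↔ e ≤ f ∨ f ≤ e := by
  simp only [Nested, Prod.le_def]
  omega

lemma IsQueue.isChain (hE : IsQueue E) : IsChain (· ≤ ·) (E : Set (ℕ × ℕ)) :=
  fun e he f hf _ ↦ not_nested_iff_le_or_le.1 (hE e he f hf)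

lemma IsOrderedGraph.subset_product (hE : IsOrderedGraph n E) :
    E ⊆ Finset.Icc 1 n ×ˢ Finset.Icc 1 n := by
  intro e he
  have := hE e he
  simp only [Finset.mem_product, Finset.mem_Icc]
  omega

/-- The `k`-queues on the vertex set `{1, …, n}` with exactly `m` edges. -/
def kQueues (n m k : ℕ) : Set (Finset (ℕ × ℕ)) :=
  {H | IsOrderedGraph n H ∧ #H = m ∧ IsKQueue k H}

/-- The vertices `1, …, n`, each tagged with one of the `k` part indices. -/
def taggedVertices (n k : ℕ) : Finset (Fin k ×ₗ ℕ) :=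
  (Finset.univ ×ˢ Finset.Icc 1 n).map toLex.toEmbedding

lemma card_taggedVertices (n k : ℕ) : #(taggedVertices n k) = k * n := by
  simp [taggedVertices]

lemma kQueues_subset_image_gridChains (n m k : ℕ) :
    kQueues n m k ⊆
      Finset.image untag '' gridChains (taggedVertices n k) (taggedVertices n k) m := by
  rintro H ⟨hH, rfl, parts, cover, parts_subset, parts_disjoint, parts_queue⟩
  have biUnion_parts : Finset.univ.biUnion parts = H := by
    refine subset_antisymm (Finset.biUnion_subset.2 fun i _ ↦ parts_subset i) fun e he ↦ ?_
    simpa using cover e he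
  refine ⟨lexStack parts, ⟨?_, ?_, ?_⟩, image_untag_lexStack.trans biUnion_parts⟩
  · exact lexStack_subset_product fun i ↦ (parts_subset i).trans hH.subset_product
  · exact isChain_lexStack fun i ↦ (parts_queue i).isChain
  · rw [card_lexStack, ← biUnion_parts,
      Finset.card_biUnion fun i _ j _ hij ↦ parts_disjoint i j hij]

lemma finite_kQueues (n m k : ℕ) : (kQueues n m k).Finite :=
  ((finite_gridChains _ _ m).image _).subset (kQueues_subset_image_gridChains n m k)

lemma ncard_kQueues_le (n m k : ℕ) :
    ((kQueues n m k).ncard : ℝ) ≤ (3 * Real.exp 1 * k * n / m) ^ (2 * m) := by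
  let V := taggedVertices n k
  have finite_chains : (gridChains V V m).Finite := finite_gridChains V V m
  calc ((kQueues n m k).ncard : ℝ)
      ≤ (gridChains V V m).ncard := mod_cast
        (Set.ncard_le_ncard (kQueues_subset_image_gridChains n m k) (finite_chains.image _)).trans
          (Set.ncard_image_le finite_chains)
    _ ≤ (3 * Real.exp 1 * #V / m) ^ (2 * m) := ncard_gridChains_self_le V m
    _ = (3 * Real.exp 1 * k * n / m) ^ (2 * m) := by
        rw [card_taggedVertices, Nat.cast_mul, mul_assoc _ (k : ℝ)]

end Queues

section Relabelling

variable {n m k : ℕ} {E : Finset (ℕ × ℕ)} {σ τ : Equiv.Perm ℕ}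

lemma relabel_symm_relabel (σ : Equiv.Perm ℕ) (hE : ∀ e ∈ E, e.1 ≤ e.2) :
    relabel σ.symm (relabel σ E) = E := by
  rw [relabel, relabel, Finset.image_image]
  refine (Finset.image_congr fun e he ↦ ?_).trans Finset.image_id
  have := hE e he
  rcases le_total (σ e.1) (σ e.2) with h | h <;> ext <;> simp [h, this]

lemma card_relabel (σ : Equiv.Perm ℕ) (hE : ∀ e ∈ E, e.1 ≤ e.2) : #(relabel σ E) = #E := by
  refine le_antisymm Finset.card_image_le ?_
  calc #E = #(relabel σ.symm (relabel σ E)) := by rw [relabel_symm_relabel σ hE]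
    _ ≤ #(relabel σ E) := Finset.card_image_le

lemma isOrderedGraph_relabel (hE : IsOrderedGraph n E)
    (hσ : ∀ v ∈ Finset.Icc 1 n, σ v ∈ Finset.Icc 1 n) :
    IsOrderedGraph n (relabel σ E) := by
  intro e he
  obtain ⟨f, hf, rfl⟩ := Finset.mem_image.1 he
  obtain ⟨hf₁, hf₂⟩ := Finset.mem_product.1 (hE.subset_product hf)
  have h₁ := Finset.mem_Icc.1 (hσ f.1 hf₁)
  have h₂ := Finset.mem_Icc.1 (hσ f.2 hf₂)
  dsimp only
  omega

lemma relabel_congr_of_isOrderedGraph (hE : IsOrderedGraph n E)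
    (h : ∀ v ∈ Finset.Icc 1 n, σ v = τ v) :
    relabel σ E = relabel τ E := by
  refine Finset.image_congr fun e he ↦ ?_
  obtain ⟨h₁, h₂⟩ := Finset.mem_product.1 (hE.subset_product he)
  simp only [h _ h₁, h _ h₂]

lemma exists_relabel_kQueue_eq (hE : IsOrderedGraph n E) (hq : QueueNumberLE n k E) :
    ∃ (ρ : Equiv.Perm (Finset.Icc 1 n)), ∃ H ∈ kQueues n (#E) k,
      relabel (Equiv.Perm.ofSubtype ρ) H = E := by
  obtain ⟨σ, hσ, hqueue⟩ := hq
  have hle : ∀ e ∈ E, e.1 ≤ e.2 := fun e he ↦ (hE e he).2.1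
  let σV : Equiv.Perm (Finset.Icc 1 n) := σ.subtypePermOfFintype hσ
  have relabel_σV : relabel (Equiv.Perm.ofSubtype σV) E = relabel σ E :=
    relabel_congr_of_isOrderedGraph hE fun v hv ↦ Equiv.Perm.ofSubtype_apply_of_mem σV hv
  refine ⟨σV⁻¹, relabel σ E, ⟨isOrderedGraph_relabel hE hσ, card_relabel σ hle, hqueue⟩, ?_⟩
  rw [map_inv, ← relabel_σV]
  exact relabel_symm_relabel _ hle

lemma ncard_queueNumberLE_le (n m k : ℕ) :
    {E : Finset (ℕ × ℕ) | IsOrderedGraph n E ∧ #E = m ∧ QueueNumberLE n k E}.ncard ≤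
      n.factorial * (kQueues n m k).ncard := by
  let relabelBy (x : Equiv.Perm (Finset.Icc 1 n) × Finset (ℕ × ℕ)) : Finset (ℕ × ℕ) :=
    relabel (Equiv.Perm.ofSubtype x.1) x.2
  let codes : Set (Equiv.Perm (Finset.Icc 1 n) × Finset (ℕ × ℕ)) := Set.univ ×ˢ kQueues n m k
  have codes_finite : codes.Finite := Set.finite_univ.prod (finite_kQueues n m k)
  calc {E : Finset (ℕ × ℕ) | IsOrderedGraph n E ∧ #E = m ∧ QueueNumberLE n k E}.ncard
      ≤ (relabelBy '' codes).ncard := by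
        refine Set.ncard_le_ncard ?_ (codes_finite.image relabelBy)
        rintro E ⟨hE, rfl, hq⟩
        obtain ⟨ρ, H, hH, rfl⟩ := exists_relabel_kQueue_eq hE hq
        exact ⟨(ρ, H), ⟨trivial, hH⟩, rfl⟩
    _ ≤ codes.ncard := Set.ncard_image_le codes_finite
    _ = n.factorial * (kQueues n m k).ncard := by
        rw [Set.ncard_prod, Set.ncard_univ, Nat.card_perm, Nat.card_eq_fintype_card,
          Fintype.card_coe, Nat.card_Icc, Nat.add_sub_cancel]

end Relabelling

theorem count_queueNumber_le_general (n m k : ℕ) :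
    ({E : Finset (ℕ × ℕ) |
        IsOrderedGraph n E ∧ E.card = m ∧ QueueNumberLE n k E}.ncard : ℝ) ≤
      (3 * Real.exp 1 * k * n / m) ^ (2 * m) * n.factorial :=
  calc ({E : Finset (ℕ × ℕ) |
        IsOrderedGraph n E ∧ E.card = m ∧ QueueNumberLE n k E}.ncard : ℝ)
      ≤ n.factorial * (kQueues n m k).ncard := mod_cast ncard_queueNumberLE_le n m k
    _ ≤ n.factorial * (3 * Real.exp 1 * k * n / m) ^ (2 * m) := by
        gcongr
        exact ncard_kQueues_le n m k
    _ = (3 * Real.exp 1 * k * n / m) ^ (2 * m) * n.factorial := mul_comm _ _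

/-- There is an absolute constant `c > 0` such that for all positive integers
`n`, `m`, `k` with `2m ≤ k * n` and `k ≤ m`, the number of labelled graphs
(loops allowed, no parallel edges) on `{1, …, n}` with exactly `m` edges and
queue-number at most `k` is at most `(c * k * n / m) ^ (2 * m) * n!`. -/
theorem count_queueNumber_le :
    ∃ c : ℝ, 0 < c ∧ ∀ n m k : ℕ, 0 < n → 0 < m → 0 < k →
      2 * m ≤ k * n → k ≤ m →
      ({E : Finset (ℕ × ℕ) |
          IsOrderedGraph n E ∧ E.card = m ∧ QueueNumberLE n k E}.ncard : ℝ) ≤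
        (c * k * n / m) ^ (2 * m) * n.factorial := by
  exact ⟨3 * Real.exp 1, by positivity, fun n m k _ _ _ _ _ ↦ count_queueNumber_le_general n m k⟩
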